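/- Let G be a group, n ≥ 3, let i be an index with 2 ≤ i ≤ n-1, and let g ∈ G. Let H : Gⁿ → Gⁿ be the map (b₁,…,bₙ) ↦ (b₁·b₂⁻¹, b₂·b₃⁻¹, …, b_{n-1}·bₙ⁻¹, bₙ·b₁⁻¹). Then H intertwines the two braid group actions: for every (b₁,…,bₙ) ∈ Gⁿ, Φ_i[g](H(b₁,…,bₙ)) = H(Ψ_i[g](b₁,…,bₙ)). -/

import Mathlib

/-- `Ψ_i[g]` (0-indexed here: `i` ranges over `0,…,n-2`, corresponding to the 1-indexed
positions `i+1, i+2`): the map sending `(b₁,…,bₙ)` to the tuple whose `i`-th entry is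
`b_{i+1}·b_i⁻¹·g⁻¹·b_i`, whose `(i+1)`-th entry is `b_i`, all other entries unchanged. -/
def Psi {G : Type*} [Group G] {n : ℕ} (g : G) (i : ℕ) (hi : i + 1 < n)
    (b : Fin n → G) : Fin n → G := fun j =>
  if j = (⟨i, Nat.lt_of_succ_lt hi⟩ : Fin n) then
    b ⟨i + 1, hi⟩ * (b ⟨i, Nat.lt_of_succ_lt hi⟩)⁻¹ * g⁻¹ * b ⟨i, Nat.lt_of_succ_lt hi⟩
  else if j = (⟨i + 1, hi⟩ : Fin n) then b ⟨i, Nat.lt_of_succ_lt hi⟩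
  else b j

/-- `Φ_v[g]` (parametrized here by `t = v - 2`, the 0-based index of the leftmost modified
position; the modified positions are `t, t+1, t+2`): the map sending `(a₁,…,aₙ)` to the
tuple whose `(v-1)`-th entry is `a_{v-1}·g·a_v`, whose `v`-th entry is `a_v⁻¹·g⁻¹`, whose
`(v+1)`-th entry is `a_v·a_{v+1}`, all other entries unchanged. -/
def Phi {G : Type*} [Group G] {n : ℕ} (g : G) (t : ℕ) (ht : t + 2 < n)
    (a : Fin n → G) : Fin n → G := fun j =>
  if j = (⟨t, by omega⟩ : Fin n) then a ⟨t, by omega⟩ * g * a ⟨t + 1, by omega⟩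
  else if j = (⟨t + 1, by omega⟩ : Fin n) then (a ⟨t + 1, by omega⟩)⁻¹ * g⁻¹
  else if j = (⟨t + 2, ht⟩ : Fin n) then a ⟨t + 1, by omega⟩ * a ⟨t + 2, ht⟩
  else a j

/-- The map `H : (b₁,…,bₙ) ↦ (b₁·b₂⁻¹, b₂·b₃⁻¹, …, b_{n-1}·bₙ⁻¹, bₙ·b₁⁻¹)`
(indices taken cyclically). -/
def Hmap {G : Type*} [Group G] {n : ℕ} [NeZero n] (b : Fin n → G) : Fin n → G :=
  fun j => b j * (b (j + 1))⁻¹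

/-!
The `j`-th entry of `H(b)` involves only `b_j` and its cyclic successor `b_{j+1}`. Since `Ψ_p[g]`
changes only the entries `p` and `p + 1`, passing to `H(Ψ_p[g](b))` affects only the entries
`p - 1`, `p` and `p + 1`, exactly those that `Φ` modifies; there the two sides agree by cancellation
in `G`, and elsewhere both are the entry of `H(b)`.
-/

section Fin

variable {n : ℕ} [NeZero n] {k : ℕ}

theorem fin_mk_add_one (hk : k + 1 < n) :
    (⟨k, Nat.lt_of_succ_lt hk⟩ : Fin n) + 1 = ⟨k + 1, hk⟩ :=
  Fin.ext (Fin.val_add_one_of_lt' hk)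

theorem fin_add_one_eq_mk_iff (hk : k + 1 < n) {j : Fin n} :
    j + 1 = ⟨k + 1, hk⟩ ↔ j = ⟨k, Nat.lt_of_succ_lt hk⟩ := by
  rw [← fin_mk_add_one hk, add_left_inj]

end Fin

section Entries

variable {G : Type*} [Group G] {n : ℕ}

theorem Hmap_apply [NeZero n] (b : Fin n → G) (j : Fin n) :
    Hmap b j = b j * (b (j + 1))⁻¹ :=
  rfl

theorem Hmap_apply_mk [NeZero n] (b : Fin n → G) {k : ℕ} (hk : k + 1 < n) :
    Hmap b ⟨k, Nat.lt_of_succ_lt hk⟩ = b ⟨k, Nat.lt_of_succ_lt hk⟩ * (b ⟨k + 1, hk⟩)⁻¹ := by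
  rw [Hmap_apply, fin_mk_add_one hk]

section Psi

variable (g : G) {i : ℕ} (hi : i + 1 < n) (b : Fin n → G)

theorem Psi_apply_left :
    Psi g i hi b ⟨i, Nat.lt_of_succ_lt hi⟩ =
      b ⟨i + 1, hi⟩ * (b ⟨i, Nat.lt_of_succ_lt hi⟩)⁻¹ * g⁻¹ * b ⟨i, Nat.lt_of_succ_lt hi⟩ :=
  if_pos rfl

theorem Psi_apply_right : Psi g i hi b ⟨i + 1, hi⟩ = b ⟨i, Nat.lt_of_succ_lt hi⟩ := by
  simp [Psi]

theorem Psi_apply_of_ne {j : Fin n} (hleft : j ≠ ⟨i, Nat.lt_of_succ_lt hi⟩)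
    (hright : j ≠ ⟨i + 1, hi⟩) : Psi g i hi b j = b j := by
  simp only [Psi, if_neg hleft, if_neg hright]

end Psi

section Phi

variable (g : G) {t : ℕ} (ht : t + 2 < n) (a : Fin n → G)

theorem Phi_apply_left :
    Phi g t ht a ⟨t, by omega⟩ = a ⟨t, by omega⟩ * g * a ⟨t + 1, by omega⟩ :=
  if_pos rfl

theorem Phi_apply_middle :
    Phi g t ht a ⟨t + 1, by omega⟩ = (a ⟨t + 1, by omega⟩)⁻¹ * g⁻¹ := by
  simp [Phi]

theorem Phi_apply_right :
    Phi g t ht a ⟨t + 2, ht⟩ = a ⟨t + 1, by omega⟩ * a ⟨t + 2, ht⟩ := by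
  simp [Phi]

theorem Phi_apply_of_ne {j : Fin n} (hleft : j ≠ ⟨t, by omega⟩)
    (hmiddle : j ≠ ⟨t + 1, by omega⟩) (hright : j ≠ ⟨t + 2, ht⟩) : Phi g t ht a j = a j := by
  simp only [Phi, if_neg hleft, if_neg hmiddle, if_neg hright]

end Phi

theorem Psi_apply_add_one_of_ne [NeZero n] (g : G) {t : ℕ} (ht : t + 2 < n) (b : Fin n → G)
    {j : Fin n} (hleft : j ≠ ⟨t, by omega⟩) (hright : j ≠ ⟨t + 1, by omega⟩) :
    Psi g (t + 1) ht b (j + 1) = b (j + 1) :=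
  Psi_apply_of_ne g ht b (mt (fin_add_one_eq_mk_iff _).mp hleft)
    (mt (fin_add_one_eq_mk_iff _).mp hright)

end Entries

/-- `H` intertwines the two braid group actions:
`Φ_i[g](H(b)) = H(Ψ_i[g](b))` for `2 ≤ i ≤ n-1` (1-indexed). Here `p = i - 1` is the
0-based index for `Psi` (so `1 ≤ p ≤ n-2`) and `p - 1 = i - 2` is the 0-based parameter
for `Phi`. -/
theorem stmt18 {G : Type*} [Group G] {n : ℕ} [NeZero n] (hn : 3 ≤ n)
    (p : ℕ) (hp1 : 1 ≤ p) (hp : p + 1 < n) (g : G) (b : Fin n → G) :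
    Phi g (p - 1) (by omega) (Hmap b) = Hmap (Psi g p hp b) := by
  obtain _ | t := p
  · contradiction
  have ht : t + 1 < n := Nat.lt_of_succ_lt hp
  funext j
  change Phi g t hp (Hmap b) j = Hmap (Psi g (t + 1) hp b) j
  by_cases hleft : j = ⟨t, Nat.lt_of_succ_lt ht⟩
  · rw [hleft, Phi_apply_left, Hmap_apply_mk b ht, Hmap_apply_mk b hp, Hmap_apply_mk _ ht,
      Psi_apply_left, Psi_apply_of_ne _ _ _ (by simp) (by simp [Nat.add_assoc])]
    group
  by_cases hmiddle : j = ⟨t + 1, ht⟩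
  · rw [hmiddle, Phi_apply_middle, Hmap_apply_mk b hp, Hmap_apply_mk _ hp, Psi_apply_left,
      Psi_apply_right]
    group
  by_cases hright : j = ⟨t + 2, hp⟩
  · -- The entry after position `t + 2` may wrap around to the first one; `Psi` fixes it either way.
    rw [hright, Phi_apply_right, Hmap_apply_mk b hp, Hmap_apply, Hmap_apply, Psi_apply_right,
      Psi_apply_add_one_of_ne _ _ _ (by simp) (by simp)]
    group
  · rw [Phi_apply_of_ne _ _ _ hleft hmiddle hright, Hmap_apply, Hmap_apply,
      Psi_apply_of_ne _ _ _ hmiddle hright, Psi_apply_add_one_of_ne _ _ _ hleft hmiddle]
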